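/- arXiv:1905.08852 — 2 statements merged into one kernel-verified Lean document; each statement's English description precedes it below -/
import Mathlib

section
/- Let V : ℝ → ℝ be continuous, let E ∈ ℝ, and let ψ : ℝ → ℝ be twice continuously differentiable with ψ(x) > 0 for all x, satisfying the eigenvalue equation −ψ''(x) + V(x)ψ(x) = E·ψ(x) for all x, and such that ψ(x) → 0 and ψ'(x) → 0 as x → ±∞. Let φ : ℝ → ℝ be twice continuously differentiable and nonnegative, vanishing only on a set of isolated points, such that the functions x ↦ ψ(x)φ(x) and x ↦ ψ(x)·(−φ''(x) + V(x)φ(x)) are integrable on ℝ, ∫ ψφ > 0, and ψ(x)φ'(x) − ψ'(x)φ(x) → 0 as x → ±∞. Then for any real numbers m and M such that m ≤ (−φ''(x) + V(x)φ(x))/φ(x) ≤ M for every x with φ(x) ≠ 0, one has m ≤ E ≤ M. -/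
open Filter MeasureTheory

/-!
By Green's identity `ψ Hφ - Hψ φ` is the derivative of `-W`, where `W = ψ φ' - ψ' φ` is the
Wronskian. As `W` vanishes at both ends of the line and `Hψ = E ψ`, integration gives
`∫ ψ Hφ = E ∫ ψ φ`. On the other hand `ψ Hφ = (Hφ / φ) ψ φ` almost everywhere: a zero of a function
at which its derivative is nonzero is isolated, so, applying this to `φ` and then to `φ'`, all but
countably many zeros of `φ` are also zeros of `φ''`. Hence `E` is the average of the local energy
`Hφ / φ` with respect to the nonnegative weight `ψ φ`.
-/

open scoped Topology

section Definitions

variable {𝕜 : Type*} [NontriviallyNormedField 𝕜]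

/-- The Wronskian `f g' - f' g` of two functions of one variable: the boundary term in Green's
identity. -/
noncomputable def wronskian {A : Type*} [NormedRing A] [NormedAlgebra 𝕜 A]
    (f g : 𝕜 → A) (x : 𝕜) : A :=
  f x * deriv g x - deriv f x * g x

/-- The Schrödinger operator `H = -d²/dx² + V` applied to a function. It is defined on all functions
through `deriv`, so it has its usual meaning only where the function is twice differentiable. -/
noncomputable def schrodinger {A : Type*} [NormedRing A] [NormedAlgebra 𝕜 A]
    (V g : 𝕜 → A) (x : 𝕜) : A :=
  -(deriv (deriv g) x) + V x * g x

/-- The local energy `(Hg) / g` of a trial function `g` for the Schrödinger operator with potential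
`V`. At the zeros of `g`, where it is meaningless, division makes it `0`. -/
noncomputable def localEnergy {A : Type*} [NormedField A] [NormedAlgebra 𝕜 A]
    (V g : 𝕜 → A) (x : 𝕜) : A :=
  schrodinger V g x / g x

end Definitions

section Green

theorem hasDerivAt_wronskian {𝕜 A : Type*} [NontriviallyNormedField 𝕜] [NormedRing A]
    [NormedAlgebra 𝕜 A] {f g : 𝕜 → A} {x : 𝕜}
    (hf : DifferentiableAt 𝕜 f x) (hf' : DifferentiableAt 𝕜 (deriv f) x)
    (hg : DifferentiableAt 𝕜 g x) (hg' : DifferentiableAt 𝕜 (deriv g) x) :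
    HasDerivAt (wronskian f g) (f x * deriv (deriv g) x - deriv (deriv f) x * g x) x := by
  refine ((hf.hasDerivAt.mul hg'.hasDerivAt).sub
    (hf'.hasDerivAt.mul hg.hasDerivAt)).congr_deriv ?_
  abel

theorem mul_schrodinger_sub_schrodinger_mul {𝕜 A : Type*} [NontriviallyNormedField 𝕜]
    [NormedCommRing A] [NormedAlgebra 𝕜 A] (V f g : 𝕜 → A) (x : 𝕜) :
    f x * schrodinger V g x - schrodinger V f x * g x =
      -(f x * deriv (deriv g) x - deriv (deriv f) x * g x) := by
  simp only [schrodinger]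
  ring

variable {A : Type*} [NormedCommRing A] [NormedAlgebra ℝ A] [CompleteSpace A] {V f g : ℝ → A}

theorem integral_mul_schrodinger_sub_schrodinger_mul {a b : A}
    (hf : Differentiable ℝ f) (hf' : Differentiable ℝ (deriv f))
    (hg : Differentiable ℝ g) (hg' : Differentiable ℝ (deriv g))
    (hint : Integrable fun x => f x * schrodinger V g x - schrodinger V f x * g x)
    (hbot : Tendsto (wronskian f g) atBot (𝓝 a)) (htop : Tendsto (wronskian f g) atTop (𝓝 b)) :
    ∫ x, (f x * schrodinger V g x - schrodinger V f x * g x) = a - b := by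
  have hderiv (x : ℝ) : HasDerivAt (-wronskian f g)
      (f x * schrodinger V g x - schrodinger V f x * g x) x := by
    rw [mul_schrodinger_sub_schrodinger_mul]
    exact (hasDerivAt_wronskian (hf x) (hf' x) (hg x) (hg' x)).neg
  rw [integral_of_hasDerivAt_of_tendsto hderiv hint hbot.neg htop.neg, neg_sub_neg]

theorem integral_mul_schrodinger_of_eigenfunction {E w : A}
    (hf : Differentiable ℝ f) (hf' : Differentiable ℝ (deriv f))
    (hE : ∀ x, schrodinger V f x = E * f x)
    (hg : Differentiable ℝ g) (hg' : Differentiable ℝ (deriv g))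
    (hfg : Integrable fun x => f x * g x) (hfHg : Integrable fun x => f x * schrodinger V g x)
    (hbot : Tendsto (wronskian f g) atBot (𝓝 w)) (htop : Tendsto (wronskian f g) atTop (𝓝 w)) :
    ∫ x, f x * schrodinger V g x = E * ∫ x, f x * g x := by
  have hHfg (x : ℝ) : schrodinger V f x * g x = E * (f x * g x) := by rw [hE, mul_assoc]
  have hint : Integrable fun x => f x * schrodinger V g x - schrodinger V f x * g x := by
    simpa only [hHfg, Pi.sub_def] using hfHg.sub (hfg.const_mul E)
  have green := integral_mul_schrodinger_sub_schrodinger_mul hf hf' hg hg' hint hbot htop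
  simp only [hHfg] at green
  rwa [integral_sub hfHg (hfg.const_mul E), integral_const_mul_of_integrable hfg, sub_self,
    sub_eq_zero] at green

end Green

section Zeros

variable {𝕜 : Type*} [NontriviallyNormedField 𝕜]

theorem isDiscrete_setOf_eq_and_deriv_ne_zero {F : Type*} [NormedAddCommGroup F] [NormedSpace 𝕜 F]
    (f : 𝕜 → F) (c : F) : IsDiscrete {x | f x = c ∧ deriv f x ≠ 0} := by
  refine .of_nhdsWithin fun x ⟨_, hx⟩ => ?_
  have hne : ∀ᶠ y in 𝓝[≠] x, f y ≠ c :=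
    (differentiableAt_of_deriv_ne_zero hx).hasDerivAt.eventually_ne hx
  rw [le_pure_iff, mem_nhdsWithin_iff_eventually]
  filter_upwards [eventually_nhdsWithin_iff.1 hne] with y hy hyc
  exact not_not.1 fun hyx => hy hyx hyc.1

variable [HereditarilyLindelofSpace 𝕜] [MeasurableSpace 𝕜]
  (μ : Measure 𝕜) [NullSingletonClass μ]

theorem ae_deriv_eq_zero_of_eq {F : Type*} [NormedAddCommGroup F] [NormedSpace 𝕜 F]
    (f : 𝕜 → F) (c : F) : ∀ᵐ x ∂μ, f x = c → deriv f x = 0 := by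
  have hcount : {x | f x = c ∧ deriv f x ≠ 0}.Countable :=
    (HereditarilyLindelofSpace.isLindelof _).countable_of_isDiscrete
      (isDiscrete_setOf_eq_and_deriv_ne_zero f c)
  filter_upwards [hcount.ae_notMem μ] with x hx hfx
  exact not_not.1 fun hne => hx ⟨hfx, hne⟩

theorem ae_schrodinger_eq_zero_of_eq_zero {A : Type*} [NormedRing A] [NormedAlgebra 𝕜 A]
    (V g : 𝕜 → A) : ∀ᵐ x ∂μ, g x = 0 → schrodinger V g x = 0 := by
  filter_upwards [ae_deriv_eq_zero_of_eq μ g 0, ae_deriv_eq_zero_of_eq μ (deriv g) 0]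
    with x hg hg' hx
  simp [schrodinger, hx, hg' (hg hx)]

theorem mul_schrodinger_ae_eq_localEnergy_mul {A : Type*} [NormedField A] [NormedAlgebra 𝕜 A]
    (V f g : 𝕜 → A) :
    (fun x => f x * schrodinger V g x) =ᵐ[μ] fun x => localEnergy V g x * (f x * g x) := by
  filter_upwards [ae_schrodinger_eq_zero_of_eq_zero μ V g] with x hx
  rw [localEnergy, mul_left_comm, div_mul_cancel_of_imp hx]

end Zeros

section WeightedAverage

variable {α : Type*} [MeasurableSpace α] {μ : Measure α} {e w : α → ℝ}

theorem mul_integral_le_integral_mul_of_le {m : ℝ} (hw : 0 ≤ᵐ[μ] w) (hint : Integrable w μ)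
    (heint : Integrable (fun x => e x * w x) μ) (hm : ∀ᵐ x ∂μ, w x ≠ 0 → m ≤ e x) :
    m * ∫ x, w x ∂μ ≤ ∫ x, e x * w x ∂μ := by
  rw [← integral_const_mul]
  refine integral_mono_ae (hint.const_mul m) heint ?_
  filter_upwards [hw, hm] with x hwx hmx
  rcases eq_or_ne (w x) 0 with hx | hx
  · simp [hx]
  · exact mul_le_mul_of_nonneg_right (hmx hx) hwx

theorem integral_mul_le_mul_integral_of_le {M : ℝ} (hw : 0 ≤ᵐ[μ] w) (hint : Integrable w μ)
    (heint : Integrable (fun x => e x * w x) μ) (hM : ∀ᵐ x ∂μ, w x ≠ 0 → e x ≤ M) :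
    ∫ x, e x * w x ∂μ ≤ M * ∫ x, w x ∂μ := by
  have h := mul_integral_le_integral_mul_of_le (e := -e) (m := -M) hw hint
    (by simpa using heint.neg) (hM.mono fun _ hx hne => neg_le_neg (hx hne))
  simpa [integral_neg] using h

end WeightedAverage

theorem ground_state_local_energy_general {V ψ φ : ℝ → ℝ} {E m M : ℝ}
    (hψ : Differentiable ℝ ψ) (hψ' : Differentiable ℝ (deriv ψ))
    (hE : ∀ x, schrodinger V ψ x = E * ψ x)
    (hφ : Differentiable ℝ φ) (hφ' : Differentiable ℝ (deriv φ))
    (hnonneg : ∀ x, 0 ≤ ψ x * φ x)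
    (hint : Integrable fun x => ψ x * φ x)
    (hHint : Integrable fun x => ψ x * schrodinger V φ x)
    (hpos : 0 < ∫ x, ψ x * φ x)
    (hWtop : Tendsto (wronskian ψ φ) atTop (𝓝 0)) (hWbot : Tendsto (wronskian ψ φ) atBot (𝓝 0))
    (hm : ∀ x, φ x ≠ 0 → m ≤ localEnergy V φ x) (hM : ∀ x, φ x ≠ 0 → localEnergy V φ x ≤ M) :
    m ≤ E ∧ E ≤ M := by
  have hae := mul_schrodinger_ae_eq_localEnergy_mul volume V ψ φ
  have heint : Integrable fun x => localEnergy V φ x * (ψ x * φ x) := hHint.congr hae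
  have average : ∫ x, localEnergy V φ x * (ψ x * φ x) = E * ∫ x, ψ x * φ x := by
    rw [← integral_congr_ae hae]
    exact integral_mul_schrodinger_of_eigenfunction hψ hψ' hE hφ hφ' hint hHint hWbot hWtop
  refine ⟨le_of_mul_le_mul_right ?_ hpos, le_of_mul_le_mul_right ?_ hpos⟩ <;> rw [← average]
  · exact mul_integral_le_integral_mul_of_le (.of_forall hnonneg) hint heint
      (.of_forall fun x hx => hm x (right_ne_zero_of_mul hx))
  · exact integral_mul_le_mul_integral_of_le (.of_forall hnonneg) hint heint
      (.of_forall fun x hx => hM x (right_ne_zero_of_mul hx))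

/-- Ground-state local energy theorem: for `H = -d²/dx² + V` with positive
eigenfunction `ψ` of eigenvalue `E`, and a nonnegative trial function `φ`
vanishing only at isolated points, any bounds `m ≤ (Hφ)/φ ≤ M` (at points
where `φ ≠ 0`) imply `m ≤ E ≤ M`. -/
theorem ground_state_local_energy
    (V : ℝ → ℝ) (hV : Continuous V) (E : ℝ) (ψ : ℝ → ℝ)
    (hψC2 : ContDiff ℝ 2 ψ)
    (hψpos : ∀ x, 0 < ψ x)
    (hψeq : ∀ x, -(deriv (deriv ψ) x) + V x * ψ x = E * ψ x)
    (hψtop : Tendsto ψ atTop (nhds 0)) (hψbot : Tendsto ψ atBot (nhds 0))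
    (hψ'top : Tendsto (deriv ψ) atTop (nhds 0))
    (hψ'bot : Tendsto (deriv ψ) atBot (nhds 0))
    (φ : ℝ → ℝ) (hφC2 : ContDiff ℝ 2 φ)
    (hφnn : ∀ x, 0 ≤ φ x)
    (hφiso : ∀ x, φ x = 0 → ∃ ε > 0, ∀ y, y ≠ x → |y - x| < ε → φ y ≠ 0)
    (hint1 : Integrable (fun x => ψ x * φ x))
    (hint2 : Integrable (fun x => ψ x * (-(deriv (deriv φ) x) + V x * φ x)))
    (hpos : 0 < ∫ x, ψ x * φ x)
    (hWtop : Tendsto (fun x => ψ x * deriv φ x - deriv ψ x * φ x) atTop (nhds 0))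
    (hWbot : Tendsto (fun x => ψ x * deriv φ x - deriv ψ x * φ x) atBot (nhds 0))
    (m M : ℝ)
    (hm : ∀ x, φ x ≠ 0 → m ≤ (-(deriv (deriv φ) x) + V x * φ x) / φ x)
    (hM : ∀ x, φ x ≠ 0 → (-(deriv (deriv φ) x) + V x * φ x) / φ x ≤ M) :
    m ≤ E ∧ E ≤ M :=
  ground_state_local_energy_general (hψC2.differentiable two_ne_zero)
    hψC2.differentiable_deriv_two hψeq (hφC2.differentiable two_ne_zero)
    hφC2.differentiable_deriv_two (fun x => mul_nonneg (hψpos x).le (hφnn x)) hint1 hint2 hpos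
    hWtop hWbot hm hM
end

section
/- Let F : ℝ → ℝ be twice differentiable on (0, ∞) with F'' continuous and F''(v) < 0 for all v > 0, and define s : (0, ∞) → ℝ by s(v) = F(v) − v·F'(v). Let σ : ℝ → ℝ satisfy σ(s(v)) = v for all v > 0 and s(σ(y)) = y for all y in the image s((0,∞)), with σ continuous on s((0,∞)). Then the function f̄ = F' ∘ σ is twice differentiable at s(v₀) for each v₀ > 0, and its second derivative satisfies F''(v₀)·f̄''(s(v₀)) = −1/v₀³; in particular f̄''(s(v₀)) > 0, so f̄ is convex on s((0,∞)). -/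
/-!
Since `s' = -v F''`, the intercept `s` is strictly increasing with a continuous inverse `σ`, and
every derivative of a function of `σ` is a quotient of derivatives in the parameter `v`. Hence
`f̄' = F'' / s' = -1 / v`, and differentiating `-1 / v` in the same way gives
`f̄'' = v⁻² / s' = -1 / (v³ F'')`.
-/

open Set Topology

section Order

theorem strictMonoOn_image_of_leftInvOn {α β : Type*} [LinearOrder α] [Preorder β] {f : α → β}
    {g : β → α} {t : Set α} (hf : StrictMonoOn f t) (hg : LeftInvOn g f t) :
    StrictMonoOn g (f '' t) := by
  rintro _ ⟨x, hx, rfl⟩ _ ⟨y, hy, rfl⟩ hxy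
  rw [hg hx, hg hy]
  exact (hf.lt_iff_lt hx hy).1 hxy

variable {α β : Type*} [LinearOrder α] [TopologicalSpace α] [OrderTopology α] [DenselyOrdered α]
  [NoMinOrder α] [NoMaxOrder α] [LinearOrder β] [TopologicalSpace β] [OrderTopology β]
  {f : α → β} {g : β → α} {t : Set α} {a : α}

theorem image_mem_nhds_of_strictMonoOn (hconn : IsPreconnected t) (hcont : ContinuousOn f t)
    (hf : StrictMonoOn f t) (ht : t ∈ 𝓝 a) : f '' t ∈ 𝓝 (f a) := by
  obtain ⟨b, hbt, hba⟩ : (t ∩ Iio a).Nonempty :=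
    Filter.nonempty_of_mem (Filter.inter_mem (mem_nhdsWithin_of_mem_nhds ht) self_mem_nhdsWithin)
  obtain ⟨c, hct, hac⟩ : (t ∩ Ioi a).Nonempty :=
    Filter.nonempty_of_mem (Filter.inter_mem (mem_nhdsWithin_of_mem_nhds ht) self_mem_nhdsWithin)
  have ha : a ∈ t := mem_of_mem_nhds ht
  exact Filter.mem_of_superset (Icc_mem_nhds (hf hbt ha hba) (hf ha hct hac))
    ((hconn.image f hcont).Icc_subset (mem_image_of_mem f hbt) (mem_image_of_mem f hct))

theorem continuousAt_leftInvOn_of_strictMonoOn (hconn : IsPreconnected t)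
    (hcont : ContinuousOn f t) (hf : StrictMonoOn f t) (hg : LeftInvOn g f t) (ht : t ∈ 𝓝 a) :
    ContinuousAt g (f a) := by
  refine (strictMonoOn_image_of_leftInvOn hf hg).continuousAt_of_image_mem_nhds
    (image_mem_nhds_of_strictMonoOn hconn hcont hf ht) ?_
  rwa [hg.image_image, hg (mem_of_mem_nhds ht)]

end Order

section Parametric

variable {I : Set ℝ} {s σ : ℝ → ℝ} {v s' : ℝ}

theorem hasDerivAt_leftInvOn_of_strictMonoOn (hconn : IsPreconnected I)
    (hcont : ContinuousOn s I) (hmono : StrictMonoOn s I) (hσ : LeftInvOn σ s I) (hI : I ∈ 𝓝 v)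
    (hs : HasDerivAt s s' v) (hs' : s' ≠ 0) : HasDerivAt σ s'⁻¹ (s v) := by
  have hσv : σ (s v) = v := hσ (mem_of_mem_nhds hI)
  refine .of_local_left_inverse
    (continuousAt_leftInvOn_of_strictMonoOn hconn hcont hmono hσ hI) (by rwa [hσv]) hs' ?_
  filter_upwards [image_mem_nhds_of_strictMonoOn hconn hcont hmono hI]
  rintro _ ⟨u, hu, rfl⟩
  rw [hσ hu]

theorem hasDerivAt_comp_leftInvOn_of_strictMonoOn {E : Type*} [NormedAddCommGroup E]
    [NormedSpace ℝ E] {g : ℝ → E} {g' : E} (hconn : IsPreconnected I) (hcont : ContinuousOn s I)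
    (hmono : StrictMonoOn s I) (hσ : LeftInvOn σ s I) (hI : I ∈ 𝓝 v) (hs : HasDerivAt s s' v)
    (hs' : s' ≠ 0) (hg : HasDerivAt g g' v) :
    HasDerivAt (fun y ↦ g (σ y)) (s'⁻¹ • g') (s v) := by
  rw [← hσ (mem_of_mem_nhds hI)] at hg
  exact hg.scomp (s v)
    (hasDerivAt_leftInvOn_of_strictMonoOn hconn hcont hmono hσ hI hs hs')

end Parametric

section Legendre

theorem hasDerivAt_sub_mul_deriv {𝕜 : Type*} [NontriviallyNormedField 𝕜] {F F' : 𝕜 → 𝕜} {v d : 𝕜}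
    (hF : HasDerivAt F (F' v) v) (hF' : HasDerivAt F' d v) :
    HasDerivAt (fun u ↦ F u - u * F' u) (-(v * d)) v := by
  refine (hF.fun_sub ((hasDerivAt_id' v).fun_mul hF')).congr_deriv ?_
  ring

variable {I : Set ℝ} {F F' F'' s σ : ℝ → ℝ} {v : ℝ}

/-- The Legendre transformation of a strictly concave `F` on an open interval `I` of positive
couplings, whose kinetic potential is `F' ∘ σ`. The functions `F'` and `F''` are the first two
derivatives of `F` on `I`, and `σ` inverts the intercept `s` of the tangent line at `v`. -/
structure IsLegendreOn (I : Set ℝ) (F F' F'' s σ : ℝ → ℝ) : Prop where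
  isOpen : IsOpen I
  isPreconnected : IsPreconnected I
  pos_of_mem : ∀ v ∈ I, 0 < v
  hasDerivAt : ∀ v ∈ I, HasDerivAt F (F' v) v
  hasDerivAt_deriv : ∀ v ∈ I, HasDerivAt F' (F'' v) v
  deriv2_neg : ∀ v ∈ I, F'' v < 0
  eq_intercept : ∀ v ∈ I, s v = F v - v * F' v
  leftInvOn : LeftInvOn σ s I

namespace IsLegendreOn

theorem hasDerivAt_intercept (h : IsLegendreOn I F F' F'' s σ) (hv : v ∈ I) :
    HasDerivAt s (-(v * F'' v)) v :=
  (hasDerivAt_sub_mul_deriv (h.hasDerivAt v hv) (h.hasDerivAt_deriv v hv)).congr_of_eventuallyEq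
    (Filter.eventuallyEq_of_mem (h.isOpen.mem_nhds hv) h.eq_intercept)

theorem continuousOn_intercept (h : IsLegendreOn I F F' F'' s σ) : ContinuousOn s I :=
  fun _ hv ↦ (h.hasDerivAt_intercept hv).continuousAt.continuousWithinAt

theorem deriv_intercept_pos (h : IsLegendreOn I F F' F'' s σ) (hv : v ∈ I) :
    0 < -(v * F'' v) :=
  neg_pos.2 (mul_neg_of_pos_of_neg (h.pos_of_mem v hv) (h.deriv2_neg v hv))

theorem strictMonoOn_intercept (h : IsLegendreOn I F F' F'' s σ) : StrictMonoOn s I :=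
  strictMonoOn_of_hasDerivWithinAt_pos h.isPreconnected.ordConnected.convex
    h.continuousOn_intercept
    (fun _ hv ↦ (h.hasDerivAt_intercept (interior_subset hv)).hasDerivWithinAt)
    fun _ hv ↦ h.deriv_intercept_pos (interior_subset hv)

theorem hasDerivAt_comp_inverse (h : IsLegendreOn I F F' F'' s σ) {g : ℝ → ℝ} {g' : ℝ}
    (hv : v ∈ I) (hg : HasDerivAt g g' v) :
    HasDerivAt (fun y ↦ g (σ y)) (g' / -(v * F'' v)) (s v) := by
  rw [div_eq_inv_mul]
  exact hasDerivAt_comp_leftInvOn_of_strictMonoOn h.isPreconnected h.continuousOn_intercept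
    h.strictMonoOn_intercept h.leftInvOn (h.isOpen.mem_nhds hv) (h.hasDerivAt_intercept hv)
    (h.deriv_intercept_pos hv).ne' hg

theorem hasDerivAt_kineticPotential (h : IsLegendreOn I F F' F'' s σ) (hv : v ∈ I) :
    HasDerivAt (fun y ↦ F' (σ y)) (-v⁻¹) (s v) := by
  refine (h.hasDerivAt_comp_inverse hv (h.hasDerivAt_deriv v hv)).congr_deriv ?_
  have hv₀ := (h.pos_of_mem v hv).ne'
  have hF''₀ := (h.deriv2_neg v hv).ne
  field_simp

theorem deriv_kineticPotential_eventuallyEq (h : IsLegendreOn I F F' F'' s σ) (hv : v ∈ I) :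
    deriv (fun y ↦ F' (σ y)) =ᶠ[𝓝 (s v)] fun y ↦ -(σ y)⁻¹ := by
  filter_upwards [image_mem_nhds_of_strictMonoOn h.isPreconnected h.continuousOn_intercept
    h.strictMonoOn_intercept (h.isOpen.mem_nhds hv)]
  rintro _ ⟨u, hu, rfl⟩
  rw [(h.hasDerivAt_kineticPotential hu).deriv, h.leftInvOn hu]

theorem hasDerivAt_deriv_kineticPotential (h : IsLegendreOn I F F' F'' s σ) (hv : v ∈ I) :
    HasDerivAt (deriv fun y ↦ F' (σ y)) (-(v ^ 3 * F'' v)⁻¹) (s v) := by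
  have hv₀ := (h.pos_of_mem v hv).ne'
  refine HasDerivAt.congr_of_eventuallyEq ?_ (h.deriv_kineticPotential_eventuallyEq hv)
  refine (h.hasDerivAt_comp_inverse hv (hasDerivAt_inv hv₀).fun_neg).congr_deriv ?_
  have hF''₀ := (h.deriv2_neg v hv).ne
  field_simp

theorem mul_deriv2_kineticPotential (h : IsLegendreOn I F F' F'' s σ) (hv : v ∈ I) :
    F'' v * deriv (deriv fun y ↦ F' (σ y)) (s v) = -1 / v ^ 3 := by
  rw [(h.hasDerivAt_deriv_kineticPotential hv).deriv]
  have hv₀ := (h.pos_of_mem v hv).ne'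
  have hF''₀ := (h.deriv2_neg v hv).ne
  field_simp

theorem deriv2_kineticPotential_pos (h : IsLegendreOn I F F' F'' s σ) (hv : v ∈ I) :
    0 < deriv (deriv fun y ↦ F' (σ y)) (s v) := by
  rw [(h.hasDerivAt_deriv_kineticPotential hv).deriv]
  exact neg_pos.2 <| inv_neg''.2 <|
    mul_neg_of_pos_of_neg (pow_pos (h.pos_of_mem v hv) 3) (h.deriv2_neg v hv)

theorem convexOn_kineticPotential (h : IsLegendreOn I F F' F'' s σ) :
    ConvexOn ℝ (s '' I) fun y ↦ F' (σ y) := by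
  have hconvex : Convex ℝ (s '' I) :=
    (h.isPreconnected.image s h.continuousOn_intercept).ordConnected.convex
  refine convexOn_of_deriv2_nonneg' hconvex ?_ ?_ ?_ <;> rintro _ ⟨v, hv, rfl⟩
  · exact (h.hasDerivAt_kineticPotential hv).differentiableAt.differentiableWithinAt
  · exact (h.hasDerivAt_deriv_kineticPotential hv).differentiableAt.differentiableWithinAt
  · exact (h.deriv2_kineticPotential_pos hv).le

end IsLegendreOn

theorem kinetic_potential_convexity_general (h : IsLegendreOn I F F' F'' s σ) :
    (∀ v₀ ∈ I,
      DifferentiableAt ℝ (fun y ↦ F' (σ y)) (s v₀) ∧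
      DifferentiableAt ℝ (deriv fun y ↦ F' (σ y)) (s v₀) ∧
      F'' v₀ * deriv (deriv fun y ↦ F' (σ y)) (s v₀) = -1 / v₀ ^ 3 ∧
      0 < deriv (deriv fun y ↦ F' (σ y)) (s v₀)) ∧
    ConvexOn ℝ (s '' I) fun y ↦ F' (σ y) :=
  ⟨fun _ hv ↦ ⟨(h.hasDerivAt_kineticPotential hv).differentiableAt,
    (h.hasDerivAt_deriv_kineticPotential hv).differentiableAt,
    h.mul_deriv2_kineticPotential hv, h.deriv2_kineticPotential_pos hv⟩,
    h.convexOn_kineticPotential⟩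

end Legendre

/-- Second-derivative Legendre relation for kinetic potentials: with
`s(v) = F(v) − v·F'(v)` for a concave eigenvalue function `F` (`F'' < 0`,
`F''` continuous) and `σ` the inverse of `s`, the kinetic potential
`f̄ = F' ∘ σ` is twice differentiable at each `s(v₀)`, `v₀ > 0`, with
`F''(v₀)·f̄''(s(v₀)) = −1/v₀³`; in particular `f̄''(s(v₀)) > 0` and `f̄` is
convex on `s((0,∞))`. -/
theorem kinetic_potential_convexity
    (F : ℝ → ℝ)
    (hF1 : ∀ v ∈ Set.Ioi (0 : ℝ), DifferentiableAt ℝ F v)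
    (hF2 : ∀ v ∈ Set.Ioi (0 : ℝ), DifferentiableAt ℝ (deriv F) v)
    (hF''cont : ContinuousOn (deriv (deriv F)) (Set.Ioi 0))
    (hF'' : ∀ v ∈ Set.Ioi (0 : ℝ), deriv (deriv F) v < 0)
    (s : ℝ → ℝ) (hs : ∀ v ∈ Set.Ioi (0 : ℝ), s v = F v - v * deriv F v)
    (σ : ℝ → ℝ)
    (hσ1 : ∀ v ∈ Set.Ioi (0 : ℝ), σ (s v) = v)
    (hσ2 : ∀ y ∈ s '' Set.Ioi 0, s (σ y) = y)
    (hσc : ContinuousOn σ (s '' Set.Ioi 0)) :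
    (∀ v₀ ∈ Set.Ioi (0 : ℝ),
      DifferentiableAt ℝ (fun y => deriv F (σ y)) (s v₀) ∧
      DifferentiableAt ℝ (deriv (fun y => deriv F (σ y))) (s v₀) ∧
      deriv (deriv F) v₀ * deriv (deriv (fun y => deriv F (σ y))) (s v₀)
        = -1 / v₀ ^ 3 ∧
      0 < deriv (deriv (fun y => deriv F (σ y))) (s v₀)) ∧
    ConvexOn ℝ (s '' Set.Ioi 0) (fun y => deriv F (σ y)) :=
  kinetic_potential_convexity_general ⟨isOpen_Ioi, isPreconnected_Ioi, fun _ hv ↦ hv,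
    fun v hv ↦ (hF1 v hv).hasDerivAt, fun v hv ↦ (hF2 v hv).hasDerivAt, hF'', hs, hσ1⟩
end
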